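/- arXiv:2211.09181 — 2 statements merged into one kernel-verified Lean document; each statement's English description precedes it below -/
import Mathlib

section
/- For every integer α ≥ 2, writing I(c) := PV ∫₀^∞ e^{−u/c}/(1 − u^α) du for the Cauchy principal value (which exists for every c > 0), one has lim_{c→0⁺} I(c)/c = 1; that is, (1/c)·PV ∫₀^∞ e^{−u/c}/(1 − u^α) du tends to 1 as c tends to 0 from the right. -/
/-!
Near `u = 0` the integrand is `e^{-u/c}` up to a relative error `O(u)`, and everything else is
exponentially small in `1/c`. Cut the (`ε`-truncated) integral at `1/2` and `3/2`.

* On `(0, 1/2)` the integral is `c + O(c²) + O(c e^{-1/(2c)})` (`near_bound`).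
* Around the pole write `1 - u^α = (1 - u) S(u)` with `S(u) = 1 + u + ⋯ + u^{α-1}`. Folding the
  two sides by `u = 1 ∓ t` cancels the singularity: the folded integrand is the difference
  quotient of `e^{-u/c} / S(u)`, hence bounded by `e^{-1/(2c)} (2/c + K)` with `K` depending only
  on `α` (`folded_bound`). This bound is uniform in `ε`.
* On `(3/2, ∞)` the integrand is at most `e^{-u/c}` in absolute value, so this part is at most
  `c e^{-3/(2c)}` (`tail_bound`).

Since `e^{-1/(2c)} ≤ 48 c³`, the truncated integrals lie within `M c²` of `c` for `0 < c < 1`, with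
`M` independent of `ε` (`exists_truncated_bound`). Letting `ε → 0` and dividing by `c` gives the
limit.
-/

open MeasureTheory Filter

open Set

lemma integral_exp_neg_div {d : ℝ} (hd : 0 < d) (a b : ℝ) :
    ∫ u in a..b, Real.exp (-u / d) = d * (Real.exp (-a / d) - Real.exp (-b / d)) := by
  have h : ∀ x ∈ uIcc a b, HasDerivAt (fun u => -d * Real.exp (-u / d)) (Real.exp (-x / d)) x := by
    intro x _
    have h1 : HasDerivAt (fun u : ℝ => -u / d) (-1 / d) x := ((hasDerivAt_id x).neg).div_const d
    have h2 : Real.exp (-x / d) = -d * (Real.exp (-x / d) * (-1 / d)) := by field_simp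
    rw [h2]
    exact h1.exp.const_mul (-d)
  rw [intervalIntegral.integral_eq_sub_of_hasDerivAt h
    ((by fun_prop : Continuous fun u : ℝ => Real.exp (-u / d)).intervalIntegrable a b)]
  ring

lemma near_bound {α : ℕ} (hα : 2 ≤ α) {c : ℝ} (hc : 0 < c) :
    |(∫ u in (0:ℝ)..(1/2), Real.exp (-u / c) / (1 - u ^ α)) - c|
      ≤ 4 * c ^ 2 + c * Real.exp (-1 / (2 * c)) := by
  have hpow : ∀ u : ℝ, 0 ≤ u → u ≤ 1 / 2 → 0 ≤ u ^ α ∧ u ^ α ≤ u / 2 := by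
    intro u h0 h1
    refine ⟨by positivity, (pow_le_pow_of_le_one h0 (by linarith) hα).trans ?_⟩
    nlinarith
  have hi1 : IntervalIntegrable (fun u : ℝ => Real.exp (-u / c) / (1 - u ^ α)) volume 0 (1/2) := by
    apply ContinuousOn.intervalIntegrable
    refine ContinuousOn.div (by fun_prop) (by fun_prop) ?_
    intro x hx
    rw [uIcc_of_le (by norm_num)] at hx
    have := hpow x hx.1 hx.2
    have := hx.2
    linarith
  have hi2 : IntervalIntegrable (fun u : ℝ => Real.exp (-u / c)) volume 0 (1/2) :=
    (by fun_prop : Continuous fun u : ℝ => Real.exp (-u / c)).intervalIntegrable _ _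
  have hi3 : IntervalIntegrable (fun u : ℝ => 2 * c * Real.exp (-u / (2 * c))) volume 0 (1/2) :=
    (by fun_prop : Continuous fun u : ℝ => 2 * c * Real.exp (-u / (2 * c))).intervalIntegrable _ _
  have hdiff : ‖∫ u in (0:ℝ)..(1/2), (Real.exp (-u / c) / (1 - u ^ α) - Real.exp (-u / c))‖
      ≤ ∫ u in (0:ℝ)..(1/2), 2 * c * Real.exp (-u / (2 * c)) := by
    refine intervalIntegral.norm_integral_le_of_norm_le (by norm_num) (ae_of_all _ ?_) hi3
    intro u hu
    obtain ⟨hp0, hp1⟩ := hpow u hu.1.le hu.2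
    have hu0 := hu.1
    have hu2 := hu.2
    have hden : 0 < 1 - u ^ α := by linarith
    have e1 : Real.exp (-u / c) / (1 - u ^ α) - Real.exp (-u / c)
        = Real.exp (-u / c) * (u ^ α / (1 - u ^ α)) := by
      field_simp; ring
    rw [e1, Real.norm_of_nonneg (by positivity)]
    have h2 : u ^ α / (1 - u ^ α) ≤ u := by
      rw [div_le_iff₀ hden]; nlinarith
    have h3 : u ≤ 2 * c * Real.exp (u / (2 * c)) := by
      have := Real.add_one_le_exp (u / (2 * c))
      have h4 : u / (2 * c) ≤ Real.exp (u / (2 * c)) := by linarith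
      rw [div_le_iff₀ (by positivity)] at h4
      linarith
    have e2 : Real.exp (-u / c) * Real.exp (u / (2 * c)) = Real.exp (-u / (2 * c)) := by
      rw [← Real.exp_add]; congr 1; field_simp; ring
    calc Real.exp (-u / c) * (u ^ α / (1 - u ^ α))
        ≤ Real.exp (-u / c) * (2 * c * Real.exp (u / (2 * c))) := by
          gcongr; exact h2.trans h3
      _ = 2 * c * (Real.exp (-u / c) * Real.exp (u / (2 * c))) := by ring
      _ = _ := by rw [e2]
  rw [intervalIntegral.integral_sub hi1 hi2, intervalIntegral.integral_const_mul,
    integral_exp_neg_div hc, integral_exp_neg_div (by positivity : 0 < 2 * c)] at hdiff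
  have e3 : -(1 / 2 : ℝ) / c = -1 / (2 * c) := by field_simp
  rw [e3, Real.norm_eq_abs] at hdiff
  have hpos := Real.exp_pos (-(1 / 2 : ℝ) / (2 * c))
  have hpos' := Real.exp_pos (-1 / (2 * c))
  simp only [neg_zero, zero_div, Real.exp_zero] at hdiff
  have h5 : 0 < c * c * Real.exp (-(1 / 2 : ℝ) / (2 * c)) := by positivity
  have h6 : 0 < c * Real.exp (-1 / (2 * c)) := by positivity
  rw [abs_le] at hdiff ⊢
  constructor <;> nlinarith [hdiff.1, hdiff.2]

/-- A bound for the sum of the integrand at `1 - t` and `1 + t`: the two simple-pole singularities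
cancel. -/
lemma folded_bound (α : ℕ) (hα : 2 ≤ α) : ∃ K : ℝ, 0 ≤ K ∧ ∀ c : ℝ, 0 < c → ∀ t : ℝ, 0 < t →
    t ≤ 1 / 2 →
    |Real.exp (-(1 - t) / c) / (1 - (1 - t) ^ α) + Real.exp (-(1 + t) / c) / (1 - (1 + t) ^ α)|
      ≤ Real.exp (-1 / (2 * c)) * (2 / c + K) := by
  refine ⟨∑ i ∈ Finset.range α, 2 * (i : ℝ) * 2 ^ (i - 1), by positivity, ?_⟩
  intro c hc t ht ht2
  set K : ℝ := ∑ i ∈ Finset.range α, 2 * (i : ℝ) * 2 ^ (i - 1) with hK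
  have hS1 : ∀ x : ℝ, 0 ≤ x → 1 ≤ ∑ i ∈ Finset.range α, x ^ i := by
    intro x hx
    have := Finset.single_le_sum (f := fun i => x ^ i) (s := Finset.range α)
      (fun i _ => by positivity) (Finset.mem_range.2 (by omega : 0 < α))
    simpa using this
  have hA : (∑ i ∈ Finset.range α, (1 - t) ^ i) * t = 1 - (1 - t) ^ α := by
    have := geom_sum_mul_neg (1 - t) α
    rwa [sub_sub_cancel] at this
  have hB : -((∑ i ∈ Finset.range α, (1 + t) ^ i) * t) = 1 - (1 + t) ^ α := by
    have := geom_sum_mul (1 + t) α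
    rw [add_sub_cancel_left] at this
    linarith
  have hmono : ∑ i ∈ Finset.range α, (1 - t) ^ i ≤ ∑ i ∈ Finset.range α, (1 + t) ^ i := by
    apply Finset.sum_le_sum
    intro i _
    exact pow_le_pow_left₀ (by linarith) (by linarith) i
  have hLip : ∑ i ∈ Finset.range α, (1 + t) ^ i - ∑ i ∈ Finset.range α, (1 - t) ^ i ≤ K * t := by
    rw [← Finset.sum_sub_distrib, hK, Finset.sum_mul]
    apply Finset.sum_le_sum
    intro i _
    have h1 := abs_pow_sub_pow_le (1 + t) (1 - t) i
    have h2 : |1 + t - (1 - t)| = 2 * t := by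
      rw [abs_of_nonneg (by linarith)]; ring
    have h3 : max |1 + t| |1 - t| ≤ 2 := by
      apply max_le <;> rw [abs_of_nonneg (by linarith)] <;> linarith
    have h4 : max |1 + t| |1 - t| ^ (i - 1) ≤ 2 ^ (i - 1) :=
      pow_le_pow_left₀ (by positivity) h3 _
    rw [h2] at h1
    calc (1 + t) ^ i - (1 - t) ^ i ≤ 2 * t * i * max |1 + t| |1 - t| ^ (i - 1) :=
          (le_abs_self _).trans h1
      _ ≤ 2 * t * i * 2 ^ (i - 1) := by gcongr
      _ = _ := by ring
  rw [← hA, ← hB]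
  have hP := hS1 (1 - t) (by linarith)
  have hQ := hS1 (1 + t) (by linarith)
  have hK0 : 0 ≤ K := by positivity
  generalize (∑ i ∈ Finset.range α, (1 - t) ^ i) = P at *
  generalize (∑ i ∈ Finset.range α, (1 + t) ^ i) = Q at *
  set E := Real.exp (-1 / (2 * c)) with hE
  have hE1 : Real.exp (-(1 - t) / c) ≤ E := by
    apply Real.exp_le_exp.2
    rw [div_le_div_iff₀ hc (by positivity)]
    nlinarith
  have hE21 : Real.exp (-(1 + t) / c) ≤ Real.exp (-(1 - t) / c) := by
    apply Real.exp_le_exp.2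
    gcongr
    linarith
  have hE12 : Real.exp (-(1 - t) / c) - Real.exp (-(1 + t) / c)
      ≤ Real.exp (-(1 - t) / c) * (2 * t / c) := by
    have e : Real.exp (-(1 + t) / c) = Real.exp (-(1 - t) / c) * Real.exp (-(2 * t / c)) := by
      rw [← Real.exp_add]; congr 1; field_simp; ring
    have := Real.add_one_le_exp (-(2 * t / c))
    have hp := Real.exp_pos (-(1 - t) / c)
    rw [e]
    nlinarith
  have hp1 := Real.exp_pos (-(1 - t) / c)
  have hp2 := Real.exp_pos (-(1 + t) / c)
  generalize Real.exp (-(1 - t) / c) = E1 at *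
  generalize Real.exp (-(1 + t) / c) = E2 at *
  have hP0 : 0 < P := by linarith
  have hQ0 : 0 < Q := by linarith
  have key : E1 / (P * t) + E2 / -(Q * t)
      = ((E1 - E2) / P + E2 * ((Q - P) / (P * Q))) / t := by
    field_simp; ring
  have d1 : 0 ≤ E1 - E2 := by linarith
  have d2 : 0 ≤ Q - P := by linarith
  rw [key, abs_of_nonneg (by positivity), div_le_iff₀ ht]
  have b1 : (E1 - E2) / P ≤ E * (2 * t / c) :=
    (div_le_self d1 hP).trans (hE12.trans (by gcongr))
  have b2 : (Q - P) / (P * Q) ≤ K * t :=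
    (div_le_self d2 (by nlinarith)).trans hLip
  have b3 : E2 * ((Q - P) / (P * Q)) ≤ E * (K * t) := by
    have : E2 ≤ E := hE21.trans hE1
    gcongr
  calc _ ≤ E * (2 * t / c) + E * (K * t) := add_le_add b1 b3
    _ = _ := by ring

lemma tail_bound {α : ℕ} (hα : 2 ≤ α) {c : ℝ} (hc : 0 < c) :
    IntegrableOn (fun u : ℝ => Real.exp (-u / c) / (1 - u ^ α)) (Ioi (3/2)) ∧
    |∫ u in Ioi (3/2 : ℝ), Real.exp (-u / c) / (1 - u ^ α)| ≤ c * Real.exp (-1 / (2 * c)) := by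
  have hneg : -(1 / c) < 0 := by simpa using hc
  have hform : (fun u : ℝ => Real.exp (-u / c)) = fun u => Real.exp (-(1 / c) * u) := by
    funext u; congr 1; ring
  have hint : IntegrableOn (fun u : ℝ => Real.exp (-u / c)) (Ioi (3/2)) := by
    rw [hform]; exact integrableOn_exp_mul_Ioi hneg _
  have hden : ∀ u : ℝ, 3 / 2 < u → 1 ≤ u ^ α - 1 := by
    intro u hu
    have := pow_le_pow_right₀ (by linarith : 1 ≤ u) hα
    nlinarith
  have hle : ∀ᵐ u ∂(volume.restrict (Ioi (3/2 : ℝ))),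
      ‖Real.exp (-u / c) / (1 - u ^ α)‖ ≤ Real.exp (-u / c) := by
    refine (ae_restrict_iff' measurableSet_Ioi).2 (ae_of_all _ fun u hu => ?_)
    have h := hden u hu
    rw [norm_div, Real.norm_of_nonneg (Real.exp_pos _).le]
    apply div_le_self (Real.exp_pos _).le
    rw [Real.norm_eq_abs, abs_sub_comm]
    exact h.trans (le_abs_self _)
  refine ⟨hint.mono' (by measurability : Measurable fun u : ℝ =>
    Real.exp (-u / c) / (1 - u ^ α)).aestronglyMeasurable hle, ?_⟩
  refine (norm_integral_le_of_norm_le hint hle).trans ?_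
  rw [hform, integral_exp_mul_Ioi hneg]
  have e : -Real.exp (-(1 / c) * (3 / 2)) / -(1 / c) = c * Real.exp (-(1 / c) * (3 / 2)) := by
    field_simp
  rw [e]
  gcongr
  have h0 : 0 < 1 / c := by positivity
  have e2 : -1 / (2 * c) = -(1 / c) * (1 / 2) := by field_simp
  rw [e2]
  linarith

lemma exists_truncated_bound (α : ℕ) (hα : 2 ≤ α) : ∃ M : ℝ, ∀ c : ℝ, 0 < c → c < 1 →
    ∀ ε : ℝ, 0 < ε → ε < 1 / 2 →
    |(∫ u in (0:ℝ)..(1 - ε), Real.exp (-u / c) / (1 - u ^ α)) +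
            (∫ u in Set.Ioi (1 + ε), Real.exp (-u / c) / (1 - u ^ α)) - c| ≤ M * c ^ 2 := by
  obtain ⟨K, hK0, hK⟩ := folded_bound α hα
  refine ⟨4 + 96 + 48 * (2 + K), ?_⟩
  intro c hc hc1 ε hε hε2
  set g : ℝ → ℝ := fun u => Real.exp (-u / c) / (1 - u ^ α) with hg
  have hcont : ∀ a b : ℝ, 0 ≤ a → a ≤ b → (b < 1 ∨ 1 < a) → IntervalIntegrable g volume a b := by
    intro a b ha hab h
    apply ContinuousOn.intervalIntegrable
    refine ContinuousOn.div (by fun_prop) (by fun_prop) ?_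
    intro x hx
    rw [uIcc_of_le hab] at hx
    rcases h with h | h
    · have := pow_lt_one₀ (ha.trans hx.1) (hx.2.trans_lt h) (by omega : α ≠ 0)
      linarith
    · have := one_lt_pow₀ (h.trans_le hx.1) (by omega : α ≠ 0)
      linarith
  have hnear := near_bound hα hc
  obtain ⟨htint, htail⟩ := tail_bound hα hc
  have s1 : ∫ u in (0:ℝ)..(1 - ε), g u
      = (∫ u in (0:ℝ)..(1/2), g u) + ∫ u in (1/2:ℝ)..(1 - ε), g u :=
    (intervalIntegral.integral_add_adjacent_intervals
      (hcont _ _ le_rfl (by norm_num) (Or.inl (by norm_num)))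
      (hcont _ _ (by norm_num) (by linarith) (Or.inl (by linarith)))).symm
  have s2 : ∫ u in Ioi (1 + ε), g u
      = (∫ u in (1 + ε)..(3/2), g u) + ∫ u in Ioi (3/2 : ℝ), g u :=
    (intervalIntegral.integral_interval_add_Ioi'
      (hcont _ _ (by linarith) (by linarith) (Or.inr (by linarith))) htint).symm
  have f1 : ∫ u in (1/2:ℝ)..(1 - ε), g u = ∫ t in ε..(1/2), g (1 - t) := by
    rw [intervalIntegral.integral_comp_sub_left]; norm_num
  have f2 : ∫ u in (1 + ε)..(3/2), g u = ∫ t in ε..(1/2), g (1 + t) := by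
    rw [intervalIntegral.integral_comp_add_left]; norm_num
  have hc1' : IntervalIntegrable (fun t => g (1 - t)) volume ε (1/2) := by
    have := (hcont (1/2) (1 - ε) (by norm_num) (by linarith)
      (Or.inl (by linarith))).comp_sub_left (c := 1)
    norm_num at this
    simpa using this.symm
  have hc2' : IntervalIntegrable (fun t => g (1 + t)) volume ε (1/2) := by
    have := (hcont (1 + ε) (3/2) (by linarith) (by linarith)
      (Or.inr (by linarith))).comp_add_left (c := 1)
    norm_num at this
    simpa using this
  have hmid : |(∫ t in ε..(1/2), g (1 - t)) + ∫ t in ε..(1/2), g (1 + t)|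
      ≤ Real.exp (-1 / (2 * c)) * (2 / c + K) := by
    rw [← intervalIntegral.integral_add hc1' hc2']
    refine (intervalIntegral.norm_integral_le_of_norm_le_const
      (f := fun t => g (1 - t) + g (1 + t)) (C := Real.exp (-1 / (2 * c)) * (2 / c + K)) ?_).trans ?_
    · intro t ht
      rw [uIoc_of_le hε2.le] at ht
      exact hK c hc t (hε.trans ht.1) ht.2
    · apply mul_le_of_le_one_right (by positivity)
      rw [abs_of_nonneg (by linarith)]; linarith
  have hexp : Real.exp (-1 / (2 * c)) ≤ 48 * c ^ 3 := by
    have h := Real.pow_div_factorial_le_exp (1 / (2 * c)) (by positivity) 3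
    have e : Real.exp (-1 / (2 * c)) = (Real.exp (1 / (2 * c)))⁻¹ := by
      rw [← Real.exp_neg]; congr 1; ring
    rw [e]
    have e2 : 48 * c ^ 3 = ((1 / (2 * c)) ^ 3 / (Nat.factorial 3 : ℕ))⁻¹ := by
      simp only [Nat.factorial]; push_cast; field_simp; norm_num
    rw [e2]
    exact inv_anti₀ (by positivity) h
  have c32 : c ^ 3 ≤ c ^ 2 := pow_le_pow_of_le_one hc.le hc1.le (by norm_num)
  have m1 : c * Real.exp (-1 / (2 * c)) ≤ 48 * c ^ 2 := by
    have := Real.exp_pos (-1 / (2 * c))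
    nlinarith
  have m2 : Real.exp (-1 / (2 * c)) * (2 / c + K) ≤ 48 * (2 + K) * c ^ 2 := by
    calc _ ≤ 48 * c ^ 3 * (2 / c + K) := by gcongr
      _ = 48 * (2 * c ^ 2 + K * c ^ 3) := by field_simp
      _ ≤ 48 * (2 * c ^ 2 + K * c ^ 2) := by gcongr
      _ = _ := by ring
  rw [s1, s2, f1, f2]
  rw [abs_le] at *
  constructor <;> linarith [hnear.1, hnear.2, htail.1, htail.2, hmid.1, hmid.2]

/-- For every integer `α ≥ 2`, writing `I c` for the Cauchy principal value
`PV ∫₀^∞ e^{−u/c}/(1 − u^α) du` (assumed to exist for every `c > 0`), one has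
`lim_{c→0⁺} I(c)/c = 1`. -/
theorem tendsto_pv_div_self_at_zero
    (α : ℕ) (hα : 2 ≤ α) (I : ℝ → ℝ)
    (hI : ∀ c : ℝ, 0 < c →
      Tendsto (fun ε : ℝ =>
          (∫ u in (0:ℝ)..(1 - ε), Real.exp (-u / c) / (1 - u ^ α)) +
            ∫ u in Set.Ioi (1 + ε), Real.exp (-u / c) / (1 - u ^ α))
        (nhdsWithin 0 (Set.Ioi 0)) (nhds (I c))) :
    Tendsto (fun c : ℝ => I c / c) (nhdsWithin 0 (Set.Ioi 0)) (nhds 1) := by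
  obtain ⟨M, hM⟩ := exists_truncated_bound α hα
  have hbound : ∀ c : ℝ, 0 < c → c < 1 → |I c - c| ≤ M * c ^ 2 := by
    intro c hc hc1
    refine le_of_tendsto ((hI c hc).sub_const c).abs ?_
    filter_upwards [Ioo_mem_nhdsGT (by norm_num : (0 : ℝ) < 1 / 2)] with ε hε
    exact hM c hc hc1 ε hε.1 hε.2
  have hlim : Tendsto (fun c : ℝ => M * c) (nhdsWithin 0 (Set.Ioi 0)) (nhds 0) := by
    have : Tendsto (fun c : ℝ => M * c) (nhds 0) (nhds (M * 0)) :=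
      (continuous_const.mul continuous_id).tendsto 0
    rw [mul_zero] at this
    exact this.mono_left nhdsWithin_le_nhds
  rw [tendsto_iff_norm_sub_tendsto_zero]
  refine squeeze_zero' (Eventually.of_forall fun c => norm_nonneg _) ?_ hlim
  filter_upwards [Ioo_mem_nhdsGT (by norm_num : (0 : ℝ) < 1)] with c hc
  have hc0 : 0 < c := hc.1
  have e : I c / c - 1 = (I c - c) / c := by field_simp
  rw [e, Real.norm_eq_abs, abs_div, abs_of_pos hc0, div_le_iff₀ hc0]
  calc |I c - c| ≤ M * c ^ 2 := hbound c hc0 hc.2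
    _ = _ := by ring
end

section
/- Let a be a real number with 0 < a < 1 and let k > 0 be real. Then the improper integral ∫₀^∞ t^{−a} sin(k t) dt converges, in the sense that lim_{T→∞} ∫₀^T t^{−a} sin(k t) dt exists, and its value is Γ(1−a) · cos(πa/2) · k^{a−1}, where Γ is the Gamma function. -/
/-!
The value is obtained by Abel summation. Let `S t = (1 - cos (k t)) / k`, a primitive of `sin (k t)`
that is bounded and `O(t ^ 2)` at the origin. Integrating by parts against `t ^ (-a) * exp (-ε t)`
with `ε = 0` shows that the improper integral converges to `a * ∫ t ^ (-a - 1) * S t` over `(0, ∞)`,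
which is absolutely convergent (`tendsto_sine`). With `ε > 0` the same formula acquires a damping
factor and an extra term of size `O(ε ^ a)`, so by dominated convergence the damped integrals
`∫ t ^ (-a) * exp (-ε t) * sin (k t)` tend to the same number as `ε → 0⁺` (`tendsto_damped`).

The damped integrals are explicit: the Laplace transform of `t ^ (-a)` is `Γ(1 - a) * z ^ (a - 1)`
for `z > 0`, hence by analytic continuation for `Re z > 0` (`laplace_rpow`), and the imaginary part
at `z = ε - i k` is the damped sine integral. Letting `ε → 0⁺` and using
`(-i k) ^ (a - 1) = k ^ (a - 1) * exp (i π (1 - a) / 2)` gives the stated value.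
-/

open MeasureTheory Filter

lemma cosPrim_nonneg (k : ℝ) (hk : 0 < k) (t : ℝ) : 0 ≤ (1 - Real.cos (k * t)) / k :=
  div_nonneg (by linarith [Real.cos_le_one (k * t)]) hk.le

lemma cosPrim_le (k : ℝ) (hk : 0 < k) (t : ℝ) : (1 - Real.cos (k * t)) / k ≤ 2 / k := by
  gcongr
  linarith [Real.neg_one_le_cos (k * t)]

lemma cosPrim_le_sq (k : ℝ) (hk : 0 < k) (t : ℝ) :
    (1 - Real.cos (k * t)) / k ≤ k / 2 * t ^ 2 := by
  rw [div_le_iff₀ hk]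
  have := Real.one_sub_sq_div_two_le_cos (x := k * t)
  nlinarith

lemma hasDerivAt_cosPrim (k : ℝ) (hk : 0 < k) (t : ℝ) :
    HasDerivAt (fun t => (1 - Real.cos (k * t)) / k) (Real.sin (k * t)) t := by
  have h := (((hasDerivAt_id t).const_mul k).cos.const_sub 1).div_const k
  refine h.congr_deriv ?_
  simp only [id]
  field_simp

/-- The integrand left over after integration by parts is absolutely integrable: it is
`O(t ^ (1 - a))` at the origin and `O(t ^ (-a - 1))` at infinity. -/
lemma integrableOn_cosPrim (a : ℝ) (ha0 : 0 < a) (ha1 : a < 1) (k : ℝ) (hk : 0 < k) :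
    IntegrableOn (fun t : ℝ => t ^ (-a - 1) * ((1 - Real.cos (k * t)) / k)) (Set.Ioi 0) := by
  have hmeas : Measurable (fun t : ℝ => t ^ (-a - 1) * ((1 - Real.cos (k * t)) / k)) := by
    fun_prop
  have hsplit : Set.Ioi (0 : ℝ) = Set.Ioc 0 1 ∪ Set.Ioi 1 :=
    (Set.Ioc_union_Ioi_eq_Ioi zero_le_one).symm
  rw [hsplit]
  refine IntegrableOn.union ?_ ?_
  · have h : IntegrableOn (fun t : ℝ => k / 2 * t ^ (1 - a)) (Set.Ioc 0 1) := by
      rw [← intervalIntegrable_iff_integrableOn_Ioc_of_le zero_le_one]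
      exact (intervalIntegral.intervalIntegrable_rpow' (by linarith)).const_mul _
    refine Integrable.mono' h hmeas.aestronglyMeasurable ?_
    filter_upwards [ae_restrict_mem measurableSet_Ioc] with t ht
    have ht0 : 0 < t := ht.1
    rw [Real.norm_of_nonneg (mul_nonneg (Real.rpow_nonneg ht0.le _) (cosPrim_nonneg k hk t))]
    calc t ^ (-a - 1) * ((1 - Real.cos (k * t)) / k)
        ≤ t ^ (-a - 1) * (k / 2 * t ^ 2) := by
          gcongr
          exact cosPrim_le_sq k hk t
      _ = k / 2 * t ^ (1 - a) := by
          rw [show (1 - a) = (-a - 1) + (2 : ℕ) by push_cast; ring, Real.rpow_add_natCast ht0.ne']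
          ring
  · have h : IntegrableOn (fun t : ℝ => t ^ (-a - 1) * (2 / k)) (Set.Ioi 1) :=
      (integrableOn_Ioi_rpow_of_lt (by linarith) one_pos).mul_const _
    refine Integrable.mono' h hmeas.aestronglyMeasurable ?_
    filter_upwards [ae_restrict_mem measurableSet_Ioi] with t ht
    have ht0 : 0 < t := one_pos.trans ht
    rw [Real.norm_of_nonneg (mul_nonneg (Real.rpow_nonneg ht0.le _) (cosPrim_nonneg k hk t))]
    exact mul_le_mul_of_nonneg_left (cosPrim_le k hk t) (Real.rpow_nonneg ht0.le _)

lemma integrableOn_rpow_exp (s : ℝ) (hs : -1 < s) (ε : ℝ) (hε : 0 < ε) :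
    IntegrableOn (fun t : ℝ => t ^ s * Real.exp (-(ε * t))) (Set.Ioi 0) := by
  simpa using integrableOn_rpow_mul_exp_neg_mul_rpow (p := 1) hs one_pos hε

lemma intervalIntegrable_damped (a : ℝ) (ha1 : a < 1) (ε : ℝ) (f : ℝ → ℝ) (hf : Continuous f)
    (T : ℝ) :
    IntervalIntegrable (fun t : ℝ => t ^ (-a) * Real.exp (-(ε * t)) * f t) volume 0 T := by
  have h : IntervalIntegrable (fun t : ℝ => t ^ (-a)) volume 0 T :=
    intervalIntegral.intervalIntegrable_rpow' (by linarith)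
  have := h.mul_continuousOn (g := fun t => Real.exp (-(ε * t)) * f t) (by fun_prop)
  simpa only [mul_assoc] using this

/-- Integration by parts for the exponentially damped integrand, with `(1 - cos (k t)) / k` as the
primitive of `sin (k t)`; it vanishes to second order at `0`, so no boundary term appears there.
The case `ε = 0` is allowed. -/
lemma damped_by_parts (a : ℝ) (ha0 : 0 < a) (ha1 : a < 1) (k : ℝ) (hk : 0 < k) (ε : ℝ)
    (hε : 0 ≤ ε) (T : ℝ) (hT : 0 ≤ T) :
    ∫ t in (0:ℝ)..T, t ^ (-a) * Real.exp (-(ε * t)) * Real.sin (k * t) =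
      T ^ (-a) * Real.exp (-(ε * T)) * ((1 - Real.cos (k * T)) / k)
      + a * (∫ t in (0:ℝ)..T, t ^ (-a - 1) * ((1 - Real.cos (k * t)) / k) * Real.exp (-(ε * t)))
      + ε * ∫ t in (0:ℝ)..T, t ^ (-a) * Real.exp (-(ε * t)) * ((1 - Real.cos (k * t)) / k) := by
  have i1 := intervalIntegrable_damped a ha1 ε (fun t => Real.sin (k * t)) (by fun_prop) T
  have i3 := intervalIntegrable_damped a ha1 ε (fun t => (1 - Real.cos (k * t)) / k)
    (by fun_prop) T
  have i2 : IntervalIntegrable (fun t : ℝ =>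
      t ^ (-a - 1) * ((1 - Real.cos (k * t)) / k) * Real.exp (-(ε * t))) volume 0 T := by
    have h : IntervalIntegrable (fun t : ℝ => t ^ (-a - 1) * ((1 - Real.cos (k * t)) / k))
        volume 0 T := by
      rw [intervalIntegrable_iff_integrableOn_Ioc_of_le hT]
      exact (integrableOn_cosPrim a ha0 ha1 k hk).mono_set Set.Ioc_subset_Ioi_self
    exact h.mul_continuousOn (by fun_prop)
  have key := intervalIntegral.integral_eq_sub_of_hasDerivAt_of_le hT
    (f := fun t => t ^ (-a) * Real.exp (-(ε * t)) * ((1 - Real.cos (k * t)) / k))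
    (f' := fun t => t ^ (-a) * Real.exp (-(ε * t)) * Real.sin (k * t)
      - a * (t ^ (-a - 1) * ((1 - Real.cos (k * t)) / k) * Real.exp (-(ε * t)))
      - ε * (t ^ (-a) * Real.exp (-(ε * t)) * ((1 - Real.cos (k * t)) / k)))
    ?_ ?_ ((i1.sub (i2.const_mul a)).sub (i3.const_mul ε))
  · rw [intervalIntegral.integral_sub (i1.sub (i2.const_mul a)) (i3.const_mul ε),
      intervalIntegral.integral_sub i1 (i2.const_mul a), intervalIntegral.integral_const_mul,
      intervalIntegral.integral_const_mul] at key
    simp only [mul_zero, Real.cos_zero, sub_self, zero_div, sub_zero] at key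
    linarith
  · intro t ht
    rcases ht.1.eq_or_lt with h0 | h0
    · subst h0
      -- Near `0` the function lies between `0` and `k / 2 * t ^ (2 - a)`.
      have hb : Tendsto (fun t : ℝ => k / 2 * t ^ (2 - a)) (nhdsWithin 0 (Set.Icc 0 T))
          (nhds 0) := by
        have h2a : 0 < 2 - a := by linarith
        have h := ((Real.continuousAt_rpow_const 0 (2 - a) (Or.inr h2a.le)).tendsto.const_mul
          (k / 2)).mono_left (nhdsWithin_le_nhds (s := Set.Icc 0 T))
        rwa [Real.zero_rpow h2a.ne', mul_zero] at h
      unfold ContinuousWithinAt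
      simp only [mul_zero, Real.cos_zero, sub_self, zero_div]
      refine tendsto_of_tendsto_of_tendsto_of_le_of_le' tendsto_const_nhds hb ?_ ?_
      · filter_upwards [self_mem_nhdsWithin] with t ht
        have := cosPrim_nonneg k hk t
        have ht0 : 0 ≤ t := ht.1
        positivity
      · filter_upwards [self_mem_nhdsWithin] with t ht
        rcases ht.1.eq_or_lt with h0 | h0
        · subst h0
          simp [Real.zero_rpow (show 2 - a ≠ 0 by linarith)]
        · calc t ^ (-a) * Real.exp (-(ε * t)) * ((1 - Real.cos (k * t)) / k)
              ≤ t ^ (-a) * 1 * (k / 2 * t ^ 2) := by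
                refine mul_le_mul ?_ (cosPrim_le_sq k hk t) (cosPrim_nonneg k hk t)
                  (by positivity)
                refine mul_le_mul_of_nonneg_left ?_ (by positivity)
                rw [Real.exp_le_one_iff]
                exact neg_nonpos.2 (by positivity)
            _ = k / 2 * t ^ (2 - a) := by
                rw [show 2 - a = -a + (2 : ℕ) by push_cast; ring, Real.rpow_add_natCast h0.ne']
                ring
    · refine ContinuousAt.continuousWithinAt ?_
      have : ContinuousAt (fun t : ℝ => t ^ (-a)) t :=
        Real.continuousAt_rpow_const _ _ (Or.inl h0.ne')
      exact (this.mul (by fun_prop)).mul (by fun_prop)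
  · intro t ht
    have h1 := Real.hasDerivAt_rpow_const (x := t) (p := -a) (Or.inl ht.1.ne')
    have h2 := (((hasDerivAt_id t).const_mul ε).neg).exp
    refine ((h1.mul h2).mul (hasDerivAt_cosPrim k hk t)).congr_deriv ?_
    simp only [id, Pi.mul_apply, Pi.neg_apply]
    ring

/-- The original improper integral converges, to an absolutely convergent one. -/
lemma tendsto_sine (a : ℝ) (ha0 : 0 < a) (ha1 : a < 1) (k : ℝ) (hk : 0 < k) :
    Tendsto (fun T : ℝ => ∫ t in (0:ℝ)..T, t ^ (-a) * Real.sin (k * t)) atTop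
      (nhds (a * ∫ t in Set.Ioi (0:ℝ), t ^ (-a - 1) * ((1 - Real.cos (k * t)) / k))) := by
  have h1 : Tendsto (fun T : ℝ => T ^ (-a) * ((1 - Real.cos (k * T)) / k)) atTop (nhds 0) := by
    have h := (tendsto_rpow_neg_atTop ha0).mul_const (2 / k)
    rw [zero_mul] at h
    refine tendsto_of_tendsto_of_tendsto_of_le_of_le' tendsto_const_nhds h ?_ ?_
    · filter_upwards [eventually_ge_atTop 0] with T hT
      exact mul_nonneg (Real.rpow_nonneg hT _) (cosPrim_nonneg k hk T)
    · filter_upwards [eventually_ge_atTop 0] with T hT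
      exact mul_le_mul_of_nonneg_left (cosPrim_le k hk T) (Real.rpow_nonneg hT _)
  have h2 := (intervalIntegral_tendsto_integral_Ioi 0
    (integrableOn_cosPrim a ha0 ha1 k hk) tendsto_id).const_mul a
  have h := h1.add h2
  rw [zero_add] at h
  refine h.congr' ?_
  filter_upwards [eventually_ge_atTop 0] with T hT
  have := damped_by_parts a ha0 ha1 k hk 0 le_rfl T hT
  simp only [zero_mul, neg_zero, Real.exp_zero, mul_one, add_zero] at this
  exact this.symm

/-- The limit `T → ∞` of `damped_by_parts`, for positive damping. -/
lemma damped_eq (a : ℝ) (ha0 : 0 < a) (ha1 : a < 1) (k : ℝ) (hk : 0 < k) (ε : ℝ) (hε : 0 < ε) :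
    ∫ t in Set.Ioi (0:ℝ), t ^ (-a) * Real.exp (-(ε * t)) * Real.sin (k * t) =
      a * (∫ t in Set.Ioi (0:ℝ),
        t ^ (-a - 1) * ((1 - Real.cos (k * t)) / k) * Real.exp (-(ε * t)))
      + ε * ∫ t in Set.Ioi (0:ℝ),
        t ^ (-a) * Real.exp (-(ε * t)) * ((1 - Real.cos (k * t)) / k) := by
  have hint := integrableOn_rpow_exp (-a) (by linarith) ε hε
  have i1 : IntegrableOn (fun t : ℝ => t ^ (-a) * Real.exp (-(ε * t)) * Real.sin (k * t))
      (Set.Ioi 0) :=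
    hint.mul_bdd (c := 1) (by fun_prop)
      (Eventually.of_forall fun t => Real.abs_sin_le_one _)
  have i3 : IntegrableOn (fun t : ℝ => t ^ (-a) * Real.exp (-(ε * t)) *
      ((1 - Real.cos (k * t)) / k)) (Set.Ioi 0) :=
    hint.mul_bdd (c := 2 / k) (by fun_prop) (Eventually.of_forall fun t => by
      rw [Real.norm_of_nonneg (cosPrim_nonneg k hk t)]; exact cosPrim_le k hk t)
  have i2 : IntegrableOn (fun t : ℝ => t ^ (-a - 1) * ((1 - Real.cos (k * t)) / k) *
      Real.exp (-(ε * t))) (Set.Ioi 0) := by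
    refine (integrableOn_cosPrim a ha0 ha1 k hk).mul_bdd (c := 1) (by fun_prop) ?_
    filter_upwards [ae_restrict_mem measurableSet_Ioi] with t ht
    rw [Real.norm_of_nonneg (Real.exp_pos _).le, Real.exp_le_one_iff]
    exact neg_nonpos.2 (mul_nonneg hε.le (le_of_lt ht))
  have h1 : Tendsto (fun T : ℝ => T ^ (-a) * Real.exp (-(ε * T)) *
      ((1 - Real.cos (k * T)) / k)) atTop (nhds 0) := by
    have h := (tendsto_rpow_neg_atTop ha0).mul_const (2 / k)
    rw [zero_mul] at h
    refine tendsto_of_tendsto_of_tendsto_of_le_of_le' tendsto_const_nhds h ?_ ?_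
    · filter_upwards [eventually_ge_atTop 0] with T hT
      have := cosPrim_nonneg k hk T
      positivity
    · filter_upwards [eventually_ge_atTop 0] with T hT
      refine mul_le_mul ?_ (cosPrim_le k hk T) (cosPrim_nonneg k hk T) (Real.rpow_nonneg hT _)
      refine mul_le_of_le_one_right (Real.rpow_nonneg hT _) ?_
      rw [Real.exp_le_one_iff]
      exact neg_nonpos.2 (mul_nonneg hε.le hT)
  have l1 := intervalIntegral_tendsto_integral_Ioi 0 i1 tendsto_id
  have l2 := (intervalIntegral_tendsto_integral_Ioi 0 i2 tendsto_id).const_mul a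
  have l3 := (intervalIntegral_tendsto_integral_Ioi 0 i3 tendsto_id).const_mul ε
  have h := (h1.add l2).add l3
  rw [zero_add] at h
  refine tendsto_nhds_unique l1 (h.congr' ?_)
  filter_upwards [eventually_ge_atTop 0] with T hT
  exact (damped_by_parts a ha0 ha1 k hk ε hε.le T hT).symm

/-- Abel summation: the damped integrals tend to the same absolutely convergent integral. -/
lemma tendsto_damped (a : ℝ) (ha0 : 0 < a) (ha1 : a < 1) (k : ℝ) (hk : 0 < k) :
    Tendsto (fun ε : ℝ =>
        ∫ t in Set.Ioi (0:ℝ), t ^ (-a) * Real.exp (-(ε * t)) * Real.sin (k * t))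
      (nhdsWithin 0 (Set.Ioi 0))
      (nhds (a * ∫ t in Set.Ioi (0:ℝ), t ^ (-a - 1) * ((1 - Real.cos (k * t)) / k))) := by
  have h1 : Tendsto (fun ε : ℝ => ∫ t in Set.Ioi (0:ℝ),
        t ^ (-a - 1) * ((1 - Real.cos (k * t)) / k) * Real.exp (-(ε * t)))
      (nhdsWithin 0 (Set.Ioi 0))
      (nhds (∫ t in Set.Ioi (0:ℝ), t ^ (-a - 1) * ((1 - Real.cos (k * t)) / k))) := by
    refine tendsto_integral_filter_of_dominated_convergence _ ?_ ?_
      (integrableOn_cosPrim a ha0 ha1 k hk) ?_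
    · exact Eventually.of_forall fun ε => Measurable.aestronglyMeasurable (by fun_prop)
    · filter_upwards [self_mem_nhdsWithin] with ε hε
      filter_upwards [ae_restrict_mem measurableSet_Ioi] with t ht
      have ht0 : 0 < t := ht
      have hε0 : 0 < ε := hε
      have := cosPrim_nonneg k hk t
      rw [Real.norm_of_nonneg (by positivity)]
      refine mul_le_of_le_one_right (by positivity) ?_
      rw [Real.exp_le_one_iff]
      exact neg_nonpos.2 (by positivity)
    · refine Eventually.of_forall fun t => ?_
      refine Tendsto.mono_left ?_ nhdsWithin_le_nhds
      have : Continuous (fun ε : ℝ =>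
        t ^ (-a - 1) * ((1 - Real.cos (k * t)) / k) * Real.exp (-(ε * t))) := by fun_prop
      simpa using this.tendsto 0
  have h2 : Tendsto (fun ε : ℝ => ε * ∫ t in Set.Ioi (0:ℝ),
        t ^ (-a) * Real.exp (-(ε * t)) * ((1 - Real.cos (k * t)) / k))
      (nhdsWithin 0 (Set.Ioi 0)) (nhds 0) := by
    -- The integral is at most `(2 / k) * ε ^ (a - 1) * Γ (1 - a)`, so the product is `O(ε ^ a)`.
    have hb : Tendsto (fun ε : ℝ => ε ^ a * (Real.Gamma (1 - a) * (2 / k)))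
        (nhdsWithin 0 (Set.Ioi 0)) (nhds 0) := by
      have : Tendsto (fun ε : ℝ => ε ^ a) (nhds 0) (nhds 0) := by
        simpa [Real.zero_rpow ha0.ne'] using
          (Real.continuousAt_rpow_const 0 a (Or.inr ha0.le)).tendsto
      simpa using (this.mono_left nhdsWithin_le_nhds).mul_const (Real.Gamma (1 - a) * (2 / k))
    refine tendsto_of_tendsto_of_tendsto_of_le_of_le' tendsto_const_nhds hb ?_ ?_
    · filter_upwards [self_mem_nhdsWithin] with ε hε
      refine mul_nonneg (le_of_lt hε) (setIntegral_nonneg measurableSet_Ioi fun t ht => ?_)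
      have ht0 : 0 < t := ht
      have := cosPrim_nonneg k hk t
      positivity
    · filter_upwards [self_mem_nhdsWithin] with ε hε
      have hε0 : 0 < ε := hε
      have hint := integrableOn_rpow_exp (-a) (by linarith) ε hε0
      have hle : ∫ t in Set.Ioi (0:ℝ),
          t ^ (-a) * Real.exp (-(ε * t)) * ((1 - Real.cos (k * t)) / k) ≤
          ∫ t in Set.Ioi (0:ℝ), t ^ (-a) * Real.exp (-(ε * t)) * (2 / k) := by
        refine setIntegral_mono_on ?_ (hint.mul_const _) measurableSet_Ioi fun t ht => ?_
        · exact hint.mul_bdd (c := 2 / k) (by fun_prop) (Eventually.of_forall fun t => by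
            rw [Real.norm_of_nonneg (cosPrim_nonneg k hk t)]; exact cosPrim_le k hk t)
        · have ht0 : 0 < t := ht
          exact mul_le_mul_of_nonneg_left (cosPrim_le k hk t) (by positivity)
      have hG := Real.integral_rpow_mul_exp_neg_mul_Ioi (a := 1 - a) (by linarith) hε0
      rw [show 1 - a - 1 = -a by ring] at hG
      rw [integral_mul_const, hG] at hle
      calc _ ≤ ε * ((1 / ε) ^ (1 - a) * Real.Gamma (1 - a) * (2 / k)) := by gcongr
        _ = _ := by
          have : ε * (1 / ε) ^ (1 - a) = ε ^ a := by
            rw [one_div, Real.inv_rpow hε0.le, ← Real.rpow_neg hε0.le]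
            nth_rewrite 1 [← Real.rpow_one ε]
            rw [← Real.rpow_add hε0]
            ring_nf
          rw [← this]; ring
  have h := (h1.const_mul a).add h2
  rw [add_zero] at h
  refine h.congr' ?_
  filter_upwards [self_mem_nhdsWithin] with ε hε
  exact (damped_eq a ha0 ha1 k hk ε hε).symm

lemma integrableOn_laplace (s : ℝ) (hs : -1 < s) (z : ℂ) (hz : 0 < z.re) :
    IntegrableOn (fun t : ℝ => ((t ^ s : ℝ) : ℂ) * Complex.exp (-(z * t))) (Set.Ioi 0) := by
  refine Integrable.mono' (integrableOn_rpow_exp s hs z.re hz)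
    (Measurable.aestronglyMeasurable (by fun_prop)) ?_
  filter_upwards [ae_restrict_mem measurableSet_Ioi] with t ht
  rw [norm_mul, Complex.norm_exp, Complex.norm_real,
    Real.norm_of_nonneg (Real.rpow_nonneg (le_of_lt ht) _)]
  simp

lemma differentiableOn_laplace (s : ℝ) (hs : -1 < s) :
    DifferentiableOn ℂ (fun z : ℂ =>
      ∫ t in Set.Ioi (0:ℝ), ((t ^ s : ℝ) : ℂ) * Complex.exp (-(z * t))) {z | 0 < z.re} := by
  intro z hz
  have hz0 : 0 < z.re := hz
  have hopen : IsOpen {w : ℂ | z.re / 2 < w.re} := isOpen_lt continuous_const Complex.continuous_re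
  have := hasDerivAt_integral_of_dominated_loc_of_deriv_le (μ := volume.restrict (Set.Ioi (0:ℝ)))
    (F := fun (w : ℂ) (t : ℝ) => ((t ^ s : ℝ) : ℂ) * Complex.exp (-(w * t)))
    (F' := fun (w : ℂ) (t : ℝ) => ((t ^ s : ℝ) : ℂ) * (Complex.exp (-(w * t)) * (-t)))
    (bound := fun t => t ^ (s + 1) * Real.exp (-(z.re / 2 * t)))
    (x₀ := z) (s := {w : ℂ | z.re / 2 < w.re})
    (hopen.mem_nhds (show z.re / 2 < z.re by linarith))
    (Eventually.of_forall fun w => Measurable.aestronglyMeasurable (by fun_prop))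
    (integrableOn_laplace s hs z hz0)
    (Measurable.aestronglyMeasurable (by fun_prop))
    ?_ (integrableOn_rpow_exp (s + 1) (by linarith) _ (by linarith)) ?_
  · exact this.2.differentiableAt.differentiableWithinAt
  · filter_upwards [ae_restrict_mem measurableSet_Ioi] with t ht w hw
    have ht0 : 0 < t := ht
    rw [norm_mul, norm_mul, Complex.norm_exp, norm_neg, Complex.norm_real, Complex.norm_real,
      Real.norm_of_nonneg (Real.rpow_nonneg ht0.le _), Real.norm_of_nonneg ht0.le,
      Real.rpow_add_one ht0.ne', mul_comm (Real.exp _) t, ← mul_assoc]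
    have hw' : z.re / 2 < w.re := hw
    gcongr
    simp only [Complex.neg_re, Complex.mul_re, Complex.ofReal_re, Complex.ofReal_im, mul_zero,
      sub_zero]
    nlinarith
  · refine Eventually.of_forall fun t w _ => ?_
    have h := (((hasDerivAt_id w).mul_const (t : ℂ)).neg.cexp).const_mul ((t ^ s : ℝ) : ℂ)
    simpa using h

/-- The Laplace transform of a power in the open right half-plane, by analytic continuation from
the positive real axis. -/
lemma laplace_rpow (a : ℝ) (ha1 : a < 1) (z : ℂ) (hz : 0 < z.re) :
    ∫ t in Set.Ioi (0:ℝ), ((t ^ (-a) : ℝ) : ℂ) * Complex.exp (-(z * t)) =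
      z ^ ((a - 1 : ℝ) : ℂ) * (Real.Gamma (1 - a) : ℂ) := by
  have hopen : IsOpen {w : ℂ | 0 < w.re} := isOpen_lt continuous_const Complex.continuous_re
  have hf := (differentiableOn_laplace (-a) (by linarith)).analyticOnNhd hopen
  have hg : AnalyticOnNhd ℂ (fun z : ℂ => z ^ ((a - 1 : ℝ) : ℂ) * (Real.Gamma (1 - a) : ℂ))
      {w : ℂ | 0 < w.re} := by
    refine DifferentiableOn.analyticOnNhd ?_ hopen
    intro w hw
    have hw' : w ∈ Complex.slitPlane := Or.inl hw
    exact ((differentiableAt_id.cpow_const hw').mul_const _).differentiableWithinAt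
  have hconn : IsPreconnected {w : ℂ | 0 < w.re} :=
    (convex_halfSpace_re_gt 0).isPreconnected
  refine hf.eqOn_of_preconnected_of_frequently_eq hg hconn (z₀ := 1) (by simp) ?_ hz
  have htend : Tendsto (fun x : ℝ => (x : ℂ)) (nhdsWithin 1 (Set.Ioi 1))
      (nhdsWithin 1 {1}ᶜ) := by
    refine tendsto_nhdsWithin_iff.2 ⟨?_, ?_⟩
    · exact (Complex.continuous_ofReal.tendsto' 1 1 (by simp)).mono_left nhdsWithin_le_nhds
    · filter_upwards [self_mem_nhdsWithin] with x hx
      have : (1:ℝ) < x := hx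
      simpa using this.ne'
  refine htend.frequently (Eventually.frequently ?_)
  filter_upwards [self_mem_nhdsWithin] with x hx
  have hx0 : 0 < x := one_pos.trans hx
  have hG := Real.integral_rpow_mul_exp_neg_mul_Ioi (a := 1 - a) (by linarith) hx0
  rw [show 1 - a - 1 = -a by ring, one_div, Real.inv_rpow hx0.le, ← Real.rpow_neg hx0.le,
    show -(1 - a) = a - 1 by ring] at hG
  rw [← Complex.ofReal_cpow hx0.le, ← Complex.ofReal_mul, ← hG, ← integral_complex_ofReal]
  push_cast
  rfl

lemma damped_value (a : ℝ) (ha1 : a < 1) (k ε : ℝ) (hε : 0 < ε) :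
    ∫ t in Set.Ioi (0:ℝ), t ^ (-a) * Real.exp (-(ε * t)) * Real.sin (k * t) =
      (((ε : ℂ) - k * Complex.I) ^ ((a - 1 : ℝ) : ℂ) * (Real.Gamma (1 - a) : ℂ)).im := by
  have hz : 0 < ((ε : ℂ) - k * Complex.I).re := by simpa using hε
  rw [← laplace_rpow a ha1 _ hz]
  have := integral_im (integrableOn_laplace (-a) (by linarith) _ hz)
  refine Eq.trans ?_ this
  refine integral_congr_ae (Eventually.of_forall fun t => ?_)
  simp only [RCLike.im_to_complex]
  rw [Complex.im_ofReal_mul, Complex.exp_im]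
  simp [mul_assoc]

/-- Let `0 < a < 1` and `k > 0` be real. The improper integral `∫₀^∞ t^{−a} sin(kt) dt`
converges (as `lim_{T→∞} ∫₀^T`) to `Γ(1−a)·cos(πa/2)·k^{a−1}`. -/
theorem sine_mellin_transform
    (a : ℝ) (ha0 : 0 < a) (ha1 : a < 1) (k : ℝ) (hk : 0 < k) :
    Tendsto (fun T : ℝ => ∫ t in (0:ℝ)..T, t ^ (-a) * Real.sin (k * t)) atTop
      (nhds (Real.Gamma (1 - a) * Real.cos (Real.pi * a / 2) * k ^ (a - 1))) := by
  have hlim := tendsto_damped a ha0 ha1 k hk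
  have hcont : ContinuousAt (fun ε : ℝ =>
      (((ε : ℂ) - k * Complex.I) ^ ((a - 1 : ℝ) : ℂ) * (Real.Gamma (1 - a) : ℂ)).im) 0 := by
    have hslit : (((0:ℝ) : ℂ) - k * Complex.I) ∈ Complex.slitPlane := Or.inr (by simp [hk.ne'])
    refine Complex.continuous_im.continuousAt.comp (ContinuousAt.mul ?_ continuousAt_const)
    exact ContinuousAt.cpow (by fun_prop) continuousAt_const hslit
  have hval : (((((0:ℝ) : ℂ) - k * Complex.I) ^ ((a - 1 : ℝ) : ℂ)) *
      (Real.Gamma (1 - a) : ℂ)).im =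
      Real.Gamma (1 - a) * Real.cos (Real.pi * a / 2) * k ^ (a - 1) := by
    have h0 : (((0:ℝ) : ℂ) - k * Complex.I) = (k : ℂ) * (-Complex.I) := by simp
    have hexp : (Real.log k + -(Real.pi / 2) * Complex.I) * ((a - 1 : ℝ) : ℂ) =
        ((Real.log k * (a - 1) : ℝ) : ℂ) +
          ((Real.pi / 2 - Real.pi * a / 2 : ℝ) : ℂ) * Complex.I := by
      push_cast; ring
    rw [h0, Complex.cpow_def_of_ne_zero (by simp [hk.ne']),
      Complex.log_ofReal_mul hk (by simp), Complex.log_neg_I, hexp, Complex.im_mul_ofReal,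
      Complex.exp_im]
    simp only [Complex.add_re, Complex.add_im, Complex.ofReal_re, Complex.ofReal_im,
      Complex.re_ofReal_mul, Complex.im_ofReal_mul, Complex.I_re, Complex.I_im, mul_zero, mul_one,
      add_zero, zero_add, Real.sin_pi_div_two_sub]
    rw [Real.rpow_def_of_pos hk]
    ring
  have h2 := hcont.tendsto.mono_left (nhdsWithin_le_nhds (s := Set.Ioi 0))
  rw [hval] at h2
  have heq := tendsto_nhds_unique hlim (h2.congr' (by
    filter_upwards [self_mem_nhdsWithin] with ε hε
    exact (damped_value a ha1 k ε hε).symm))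
  rw [← heq]
  exact tendsto_sine a ha0 ha1 k hk
end
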